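/- Let f ∈ L²(ℝ^d) admit an expansion f = Σ_{i=1}^∞ a_i φ_i, where each φ_i is a multivariate Gaussian function normalized to unit L² norm, Σ_{i=1}^∞ |a_i| = K < ∞, and ‖f‖ ≤ 1. Let D = {K φ_i : i ∈ ℕ} ∪ {−K φ_i : i ∈ ℕ}, and let (f_n)_{n≥0} be any sequence in L²(ℝ^d) such that for every n, ‖f_{n+1} − f‖² ≤ inf_{λ∈[0,1], φ∈D} ‖(1−λ) f_n + λ φ − f‖². Then for every n ≥ 1, ‖f_n − f‖² ≤ (K+1)²/n. -/

import Mathlib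

/-!
The Gaussian form of the `φ i` is irrelevant; only `‖φ i‖ = 1` matters. Since `f` lies in the
closed convex hull of the symmetric dictionary `{±K φ i}`, for every vector `h` some dictionary
element `g` satisfies `⟪h, g - f⟫ ≤ 0` (`exists_dictionary_inner_le`). Taking `h = fₙ - f` and
expanding the square, the cross term drops out and, for every `lam ∈ [0, 1]`,
`‖fₙ₊₁ - f‖² ≤ (1 - lam)² ‖fₙ - f‖² + lam² (K + 1)²`, because `‖g - f‖ ≤ K + 1`.
The choice `lam = 1 / (n + 1)` turns this into the bound `(K + 1)² / n` by induction on `n`.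
-/

open MeasureTheory Matrix

/-- An element of `L²(ℝ^d)` is a unit-norm multivariate Gaussian if it is a.e. equal to
`x ↦ c · exp(−½ (x−C)ᵀ B (x−C))` with `B` positive definite (precision matrix),
`C ∈ ℝ^d` (center) and `c > 0` a normalizing constant, and its `L²` norm equals `1`. -/
def IsUnitGaussianLp {d : ℕ}
    (φ : Lp ℝ 2 (volume : Measure (EuclideanSpace ℝ (Fin d)))) : Prop :=
  ∃ (c : ℝ) (B : Matrix (Fin d) (Fin d) ℝ) (C : EuclideanSpace ℝ (Fin d)),
    0 < c ∧ B.PosDef ∧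
    (∀ᵐ x ∂(volume : Measure (EuclideanSpace ℝ (Fin d))),
      φ x = c * Real.exp (-(1/2) *
        ((fun i => x i - C i) ⬝ᵥ B.mulVec (fun i => x i - C i)))) ∧
    ‖φ‖ = 1

/-- A continuous linear functional `⟪h, ·⟫` takes on the dictionary `{±K φ i}` a value that is at
most its value at `f`. No `ε` is lost although the series is infinite: if
every dictionary element had a strictly larger value, all coefficients `a i` would vanish, and then
`K = 0` and `f = 0`. -/
lemma exists_dictionary_inner_le {E : Type*} [NormedAddCommGroup E] [InnerProductSpace ℝ E]
    {f : E} {a : ℕ → ℝ} {φ : ℕ → E} {K : ℝ} (hK : HasSum (fun i => |a i|) K)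
    (hexp : HasSum (fun i => a i • φ i) f) (h : E) :
    ∃ i, inner ℝ h (K • φ i) ≤ inner ℝ h f ∨ inner ℝ h (-(K • φ i)) ≤ inner ℝ h f := by
  by_contra! hcon
  simp only [inner_neg_right, inner_smul_right] at hcon
  have hin : HasSum (fun i => a i * inner ℝ h (φ i)) (inner ℝ h f) := by
    simpa [inner_smul_right] using hexp.mapL (innerSL ℝ h)
  -- The terms of this series are nonnegative and its sum is zero.
  have hsum : HasSum (fun i => K * (a i * inner ℝ h (φ i)) - |a i| * inner ℝ h f) 0 := by
    simpa using (hin.mul_left K).sub (hK.mul_right (inner ℝ h f))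
  have hterm : ∀ i, 0 ≤ K * (a i * inner ℝ h (φ i)) - |a i| * inner ℝ h f := by
    intro i
    obtain ⟨h1, h2⟩ := hcon i
    rcases abs_cases (a i) with ⟨e, _⟩ | ⟨e, _⟩ <;> rw [e] <;> nlinarith
  have hzero := (hasSum_zero_iff_of_nonneg hterm).1 hsum
  have ha : ∀ i, a i = 0 := by
    intro i
    obtain ⟨h1, h2⟩ := hcon i
    have hi : K * (a i * inner ℝ h (φ i)) - |a i| * inner ℝ h f = 0 := congrFun hzero i
    by_contra hne
    rcases lt_or_gt_of_ne hne with hlt | hgt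
    · rw [abs_of_neg hlt] at hi
      nlinarith
    · rw [abs_of_pos hgt] at hi
      nlinarith
  have hK0 : K = 0 := hK.unique (by simp [ha])
  have hf0 : f = 0 := hexp.unique (by simp [ha])
  have := (hcon 0).1
  simp [hK0, hf0] at this

/-- **Relaxed greedy approximation by Gaussians, first corollary (ε = 0).**
If `f = Σᵢ aᵢ φᵢ` with unit-norm Gaussians `φᵢ`, `Σ |aᵢ| = K < ∞`, `‖f‖ ≤ 1`,
and `(fₙ)` is any relaxed greedy sequence over the dictionary `D = {±K φᵢ}`,
then for every `n ≥ 1`, `‖fₙ − f‖² ≤ (K+1)²/n`. -/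
theorem greedy_gaussian_approximation_error_bound_of_zero_residual {d : ℕ}
    (f : Lp ℝ 2 (volume : Measure (EuclideanSpace ℝ (Fin d))))
    (a : ℕ → ℝ) (φ : ℕ → Lp ℝ 2 (volume : Measure (EuclideanSpace ℝ (Fin d))))
    (K : ℝ)
    (hφ : ∀ i, IsUnitGaussianLp (φ i))
    (hK : HasSum (fun i => |a i|) K)
    (hexp : HasSum (fun i => a i • φ i) f)
    (hf : ‖f‖ ≤ 1)
    (D : Set (Lp ℝ 2 (volume : Measure (EuclideanSpace ℝ (Fin d)))))
    (hD : D = (Set.range fun i => K • φ i) ∪ (Set.range fun i => -(K • φ i)))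
    (fseq : ℕ → Lp ℝ 2 (volume : Measure (EuclideanSpace ℝ (Fin d))))
    (hgreedy : ∀ n : ℕ, ‖fseq (n + 1) - f‖ ^ 2 ≤
      sInf {r : ℝ | ∃ lam ∈ Set.Icc (0 : ℝ) 1, ∃ g ∈ D,
        r = ‖(1 - lam) • fseq n + lam • g - f‖ ^ 2}) :
    ∀ n : ℕ, 1 ≤ n → ‖fseq n - f‖ ^ 2 ≤ (K + 1) ^ 2 / n := by
  have hK0 : 0 ≤ K := hK.nonneg fun i => abs_nonneg _
  have hnorm : ∀ g ∈ D, ‖g - f‖ ≤ K + 1 := by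
    have hφ1 : ∀ i, ‖φ i‖ = 1 := fun i => by
      obtain ⟨_, _, _, _, _, _, h⟩ := hφ i
      exact h
    intro g hg
    have hgK : ‖g‖ = K := by
      rw [hD] at hg
      rcases hg with ⟨i, rfl⟩ | ⟨i, rfl⟩ <;> simp [norm_smul, hφ1, abs_of_nonneg hK0]
    linarith [norm_sub_le g f]
  have hstep : ∀ n, ∀ lam ∈ Set.Icc (0 : ℝ) 1,
      ‖fseq (n + 1) - f‖ ^ 2 ≤ (1 - lam) ^ 2 * ‖fseq n - f‖ ^ 2 + lam ^ 2 * (K + 1) ^ 2 := by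
    intro n lam hlam
    obtain ⟨g, hgD, hg⟩ : ∃ g ∈ D, inner ℝ (fseq n - f) g ≤ inner ℝ (fseq n - f) f := by
      obtain ⟨i, hi | hi⟩ := exists_dictionary_inner_le hK hexp (fseq n - f)
      · exact ⟨_, by rw [hD]; exact Or.inl ⟨i, rfl⟩, hi⟩
      · exact ⟨_, by rw [hD]; exact Or.inr ⟨i, rfl⟩, hi⟩
    have hle : ‖fseq (n + 1) - f‖ ^ 2 ≤ ‖(1 - lam) • fseq n + lam • g - f‖ ^ 2 := by
      refine (hgreedy n).trans (csInf_le ⟨0, ?_⟩ ⟨lam, hlam, g, hgD, rfl⟩)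
      rintro r ⟨_, _, _, _, rfl⟩
      positivity
    have hsplit : (1 - lam) • fseq n + lam • g - f
        = (1 - lam) • (fseq n - f) + lam • (g - f) := by
      module
    have hcross : inner ℝ (fseq n - f) (g - f) ≤ 0 := by
      rw [inner_sub_right]
      linarith
    have hsq : ‖g - f‖ ^ 2 ≤ (K + 1) ^ 2 := by
      gcongr
      exact hnorm g hgD
    have hcoef : 0 ≤ (1 - lam) * lam := mul_nonneg (sub_nonneg.2 hlam.2) hlam.1
    rw [hsplit, norm_add_sq_real, inner_smul_left, inner_smul_right, norm_smul, norm_smul,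
      mul_pow, mul_pow, Real.norm_eq_abs, Real.norm_eq_abs, sq_abs, sq_abs] at hle
    simp only [conj_trivial] at hle
    nlinarith [mul_nonneg hcoef (neg_nonneg.2 hcross),
      mul_le_mul_of_nonneg_left hsq (sq_nonneg lam)]
  intro n hn
  induction n, hn using Nat.le_induction with
  | base => simpa using hstep 0 1 (by simp)
  | succ n hn ih =>
    have hn0 : (0 : ℝ) < n := by exact_mod_cast hn
    have hlam : (1 / ((n : ℝ) + 1)) ∈ Set.Icc (0 : ℝ) 1 :=
      ⟨by positivity, by rw [div_le_one (by positivity)]; linarith⟩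
    calc ‖fseq (n + 1) - f‖ ^ 2
        ≤ (1 - 1 / ((n : ℝ) + 1)) ^ 2 * ‖fseq n - f‖ ^ 2
          + (1 / ((n : ℝ) + 1)) ^ 2 * (K + 1) ^ 2 := hstep n _ hlam
      _ ≤ (1 - 1 / ((n : ℝ) + 1)) ^ 2 * ((K + 1) ^ 2 / n)
          + (1 / ((n : ℝ) + 1)) ^ 2 * (K + 1) ^ 2 := by gcongr
      _ = (K + 1) ^ 2 / ((n + 1 : ℕ) : ℝ) := by
        push_cast
        field_simp
        ring
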